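/- arXiv:1211.2676 — 2 statements merged into one kernel-verified Lean document; each statement's English description precedes it below -/
import Mathlib

section
/- Fix smooth functions h, c, p, s of one variable. For every pair of smooth functions f, g of one variable, the local functionals H_f = ∫D_{(c,p,s)}(f)dx and H_g = ∫D_{(c,p,s)}(g)dx satisfy E((δH_f/δu)·(d/dx)(δH_g/δu)) = O(ε⁶), i.e. the coefficients of ε⁰, ε² and ε⁴ in E(E(D_{(c,p,s)}(f)) · (d/dx)E(D_{(c,p,s)}(g))) vanish identically as differential polynomials in u, u_x, u_xx, …. In particular, every H_f is an approximate conserved quantity, up to order ε⁶, of the PDE (eveq). -/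
open Set

noncomputable section

/-- Partial derivative of a jet density with respect to the k-th jet variable `u^(k)`. -/
def pderivJet (P : (ℕ → ℝ) → ℝ) (k : ℕ) (v : ℕ → ℝ) : ℝ :=
  deriv (fun y => P (Function.update v k y)) (v k)

/-- Total x-derivative of a jet density (no explicit x,t dependence). -/
def totalDer (P : (ℕ → ℝ) → ℝ) : (ℕ → ℝ) → ℝ :=
  fun v => ∑' k : ℕ, v (k + 1) * pderivJet P k v

/-- Euler-Lagrange operator `E(P) = Σ (-1)^k (d/dx)^k ∂P/∂u^(k)`. -/
def EulerOp (P : (ℕ → ℝ) → ℝ) : (ℕ → ℝ) → ℝ :=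
  fun v => ∑' k : ℕ, (-1 : ℝ) ^ k * (totalDer^[k] (pderivJet P k)) v

/-- Total x-derivative for densities with explicit x,t dependence. -/
def totalDerXT (P : ℝ → ℝ → (ℕ → ℝ) → ℝ) : ℝ → ℝ → (ℕ → ℝ) → ℝ :=
  fun x t v => deriv (fun y => P y t v) x + ∑' k : ℕ, v (k + 1) * pderivJet (P x t) k v

/-- Euler-Lagrange operator for densities with explicit x,t dependence. -/
def EulerOpXT (P : ℝ → ℝ → (ℕ → ℝ) → ℝ) : ℝ → ℝ → (ℕ → ℝ) → ℝ :=
  fun x t v => ∑' k : ℕ, (-1 : ℝ) ^ k *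
    (totalDerXT^[k] (fun x' t' w => pderivJet (P x' t') k w)) x t v

/-- The jet of a function of one variable at a point. -/
def jetsAt (w : ℝ → ℝ) (x : ℝ) : ℕ → ℝ := fun k => iteratedDeriv k w x

def cCoef (c h : ℝ → ℝ) (u : ℝ) : ℝ := c u * iteratedDeriv 3 h u

def pCoef (c p h : ℝ → ℝ) (u : ℝ) : ℝ :=
  p u * iteratedDeriv 3 h u + (3/10) * (c u)^2 * iteratedDeriv 4 h u

def sCoef (c p s h : ℝ → ℝ) (u : ℝ) : ℝ :=
  s u * iteratedDeriv 3 h u - (1/8) * c u * iteratedDeriv 2 c u * iteratedDeriv 4 h u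
    - (1/8) * c u * deriv c u * iteratedDeriv 5 h u - (1/24) * (c u)^2 * iteratedDeriv 6 h u
    - (1/6) * deriv p u * iteratedDeriv 4 h u - (1/6) * p u * iteratedDeriv 5 h u

/-- Dubrovin's D-operator. -/
def Dop (c p s h : ℝ → ℝ) (ε : ℝ) (v : ℕ → ℝ) : ℝ :=
  h (v 0) - ε^2/2 * cCoef c h (v 0) * (v 1)^2
    + ε^4 * (pCoef c p h (v 0) * (v 2)^2 + sCoef c p s h (v 0) * (v 1)^4)

/-- Conservation defect of a t-dependent family of densities along (eveq). -/
def consDefect (c p s h : ℝ → ℝ) (S : ℝ → ℝ → ℝ → (ℕ → ℝ) → ℝ) (ε x t : ℝ) (v : ℕ → ℝ) : ℝ :=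
  deriv (fun τ => EulerOpXT (S ε) x τ v) t
    + EulerOpXT (fun x' t' w => EulerOpXT (S ε) x' t' w * totalDer (EulerOp (Dop c p s h ε)) w) x t v

/-- Conservation up to order `O(ε^K)` along (eveq). -/
def ConservedUpTo (c p s h : ℝ → ℝ) (S : ℝ → ℝ → ℝ → (ℕ → ℝ) → ℝ) (K : ℕ) : Prop :=
  ∀ x t : ℝ, ∀ v : ℕ → ℝ, ∀ j < K, iteratedDeriv j (fun ε => consDefect c p s h S ε x t v) 0 = 0

/-!
Equality of local functionals is congruence of densities modulo total `x`-derivatives, which the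
Euler–Lagrange operator `E` annihilates, so it suffices that the coefficients of `ε⁰`, `ε²`, `ε⁴` in
the bracket density `E(D f) · (d/dx) E(D g)` are total derivatives. Integration by parts makes the
bracket antisymmetric and gives the first variation formula `E(P) ξ ≡ ev_ξ P`, where `ev_ξ` is the
evolutionary vector field of `ξ`. Together they reduce the `ε²` coefficient to the antisymmetrization
in `(f, g)` of a density symmetric in `(f, g)`, and the `ε⁴` coefficient to
`A(u) u_x u_xx² + B(u) u_x⁵`, where `A` and `B` vanish identically by the choice of `p_h` and `s_h`.
-/

open scoped ContDiff
open Filter Function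

/-- The algebra of smooth real functions, from which the coefficients of the densities are drawn. -/
def smoothFunctions : Subalgebra ℝ (ℝ → ℝ) where
  carrier := {φ | ContDiff ℝ ∞ φ}
  mul_mem' {φ ψ} (hφ : ContDiff ℝ ∞ φ) (hψ : ContDiff ℝ ∞ ψ) := mem_ofPred.2 (hφ.mul hψ)
  add_mem' {φ ψ} (hφ : ContDiff ℝ ∞ φ) (hψ : ContDiff ℝ ∞ ψ) := mem_ofPred.2 (hφ.add hψ)
  algebraMap_mem' _ := mem_ofPred.2 contDiff_const

namespace smoothFunctions

theorem mem_iff {φ : ℝ → ℝ} : φ ∈ smoothFunctions ↔ ContDiff ℝ ∞ φ := mem_ofPred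

theorem contDiff (φ : smoothFunctions) : ContDiff ℝ ∞ (φ : ℝ → ℝ) := mem_iff.1 φ.2

theorem differentiable (φ : smoothFunctions) : Differentiable ℝ (φ : ℝ → ℝ) :=
  (contDiff φ).differentiable (by simp)

/-- Differentiation `d/du` of smooth functions. -/
def D : Derivation ℝ smoothFunctions smoothFunctions :=
  Derivation.mk'
    { toFun := fun φ => ⟨deriv φ, mem_iff.2 (contDiff_infty_iff_deriv.1 (contDiff φ)).2⟩
      map_add' := fun φ ψ => Subtype.ext <| funext fun x =>
        deriv_add (differentiable φ x) (differentiable ψ x)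
      map_smul' := fun r _ => Subtype.ext <| funext fun _ => deriv_const_mul_field r }
    fun φ ψ => Subtype.ext <| funext fun x =>
      (deriv_mul (differentiable φ x) (differentiable ψ x)).trans <|
        (add_comm _ _).trans <| congrArg _ (mul_comm _ _)

theorem coe_D (φ : smoothFunctions) : (D φ : ℝ → ℝ) = deriv φ := rfl

theorem coe_iterate_D (n : ℕ) (φ : smoothFunctions) :
    (D^[n] φ : ℝ → ℝ) = iteratedDeriv n φ := by
  rw [iteratedDeriv_eq_iterate]
  exact Semiconj.iterate_right (f := ((↑) : smoothFunctions → ℝ → ℝ)) coe_D n φ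

theorem D_surjective : Surjective D := by
  rintro ⟨φ, hφ⟩
  rw [mem_iff] at hφ
  have hderiv (y : ℝ) : HasDerivAt (fun y => ∫ z in (0 : ℝ)..y, φ z) (φ y) y :=
    (hφ.continuous.integral_hasStrictDerivAt 0 y).hasDerivAt
  have hsmooth : ContDiff ℝ ∞ fun y => ∫ z in (0 : ℝ)..y, φ z := by
    rw [contDiff_infty_iff_deriv, funext fun y => (hderiv y).deriv]
    exact ⟨fun y => (hderiv y).differentiableAt, hφ⟩
  exact ⟨⟨_, mem_iff.2 hsmooth⟩, Subtype.ext <| funext fun y => (hderiv y).deriv⟩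

end smoothFunctions

open smoothFunctions

/-- The algebra of differential polynomials: polynomials in the jet variables and in smooth
functions of `u`. -/
def diffPoly : Subalgebra ℝ ((ℕ → ℝ) → ℝ) :=
  Algebra.adjoin ℝ (range (fun (k : ℕ) (v : ℕ → ℝ) => v k) ∪
    range fun (φ : smoothFunctions) (v : ℕ → ℝ) => (φ : ℝ → ℝ) (v 0))

namespace diffPoly

theorem coord_mem (k : ℕ) : (fun v : ℕ → ℝ => v k) ∈ diffPoly :=
  Algebra.subset_adjoin (Or.inl ⟨k, rfl⟩)

theorem comp_mem (φ : smoothFunctions) : (fun v : ℕ → ℝ => (φ : ℝ → ℝ) (v 0)) ∈ diffPoly :=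
  Algebra.subset_adjoin (Or.inr ⟨φ, rfl⟩)

theorem pderivJet_coord (j k : ℕ) :
    pderivJet (fun v => v j) k = fun _ => if j = k then 1 else 0 := by
  funext v
  by_cases hjk : j = k
  · subst hjk; simp [pderivJet]
  · simp [pderivJet, hjk]

theorem pderivJet_comp (φ : ℝ → ℝ) (k : ℕ) :
    pderivJet (fun v => φ (v 0)) k = fun v => if k = 0 then deriv φ (v 0) else 0 := by
  funext v
  by_cases hk : k = 0
  · subst hk; simp [pderivJet]
  · simp [pderivJet, hk, Ne.symm hk]

theorem pderivJet_const (r : ℝ) (k : ℕ) : pderivJet (fun _ => r) k = 0 := by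
  funext v
  simp [pderivJet]

theorem differentiable_update {P : (ℕ → ℝ) → ℝ} (hP : P ∈ diffPoly) (k : ℕ) (v : ℕ → ℝ) :
    Differentiable ℝ fun y => P (update v k y) := by
  induction hP using Algebra.adjoin_induction with
  | mem P hP =>
    rcases hP with ⟨j, rfl⟩ | ⟨φ, rfl⟩
    · by_cases hjk : j = k
      · subst hjk; simp
      · simp [hjk]
    · by_cases hk : 0 = k
      · subst hk; simpa using differentiable φ
      · simp [hk]
  | algebraMap r => exact differentiable_const r
  | add P Q _ _ hP hQ => exact hP.add hQ
  | mul P Q _ _ hP hQ => exact hP.mul hQ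

theorem pderivJet_add {P Q : (ℕ → ℝ) → ℝ} (hP : P ∈ diffPoly) (hQ : Q ∈ diffPoly) (k : ℕ) :
    pderivJet (P + Q) k = pderivJet P k + pderivJet Q k :=
  funext fun v => deriv_add (differentiable_update hP k v _) (differentiable_update hQ k v _)

theorem pderivJet_mul {P Q : (ℕ → ℝ) → ℝ} (hP : P ∈ diffPoly) (hQ : Q ∈ diffPoly) (k : ℕ) :
    pderivJet (P * Q) k = P * pderivJet Q k + Q * pderivJet P k := by
  funext v
  have hmul :=
    deriv_mul (differentiable_update hP k v (v k)) (differentiable_update hQ k v (v k))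
  simp only [update_eq_self] at hmul
  exact hmul.trans ((add_comm _ _).trans (congrArg _ (mul_comm _ _)))

theorem pderivJet_smul (r : ℝ) (P : (ℕ → ℝ) → ℝ) (k : ℕ) :
    pderivJet (r • P) k = r • pderivJet P k :=
  funext fun _ => deriv_const_mul_field r

theorem pderivJet_mem {P : (ℕ → ℝ) → ℝ} (hP : P ∈ diffPoly) (k : ℕ) :
    pderivJet P k ∈ diffPoly := by
  induction hP using Algebra.adjoin_induction with
  | mem P hP =>
    rcases hP with ⟨j, rfl⟩ | ⟨φ, rfl⟩
    · rw [pderivJet_coord]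
      exact diffPoly.algebraMap_mem _
    · by_cases hk : k = 0
      · subst hk
        simpa only [pderivJet_comp, if_true] using! comp_mem (D φ)
      · simp only [pderivJet_comp, hk, if_false]
        exact diffPoly.zero_mem
  | algebraMap r => exact pderivJet_const r k ▸ diffPoly.zero_mem
  | add P Q hP hQ hP' hQ' =>
    rw [pderivJet_add hP hQ]
    exact diffPoly.add_mem hP' hQ'
  | mul P Q hP hQ hP' hQ' =>
    rw [pderivJet_mul hP hQ]
    exact diffPoly.add_mem (diffPoly.mul_mem hP hQ') (diffPoly.mul_mem hQ hP')

theorem eventually_pderivJet_eq_zero {P : (ℕ → ℝ) → ℝ} (hP : P ∈ diffPoly) :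
    ∀ᶠ k in cofinite, pderivJet P k = 0 := by
  induction hP using Algebra.adjoin_induction with
  | mem P hP =>
    rcases hP with ⟨j, rfl⟩ | ⟨φ, rfl⟩
    · filter_upwards [eventually_cofinite_ne j] with k hk
      rw [pderivJet_coord, if_neg hk.symm]
      rfl
    · filter_upwards [eventually_cofinite_ne 0] with k hk
      simp only [pderivJet_comp, if_neg hk]
      rfl
  | algebraMap r => exact .of_forall (pderivJet_const r)
  | add P Q hP hQ hP' hQ' =>
    filter_upwards [hP', hQ'] with k hPk hQk
    rw [pderivJet_add hP hQ, hPk, hQk, add_zero]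
  | mul P Q hP hQ hP' hQ' =>
    filter_upwards [hP', hQ'] with k hPk hQk
    rw [pderivJet_mul hP hQ, hPk, hQk, mul_zero, mul_zero, add_zero]

/-- The jet variable `u^(k)` as a differential polynomial. -/
def jetVar (k : ℕ) : diffPoly := ⟨fun v => v k, coord_mem k⟩

/-- The smooth function `φ(u)` of the undifferentiated jet variable, as a differential
polynomial. -/
def ofSmooth : smoothFunctions →ₐ[ℝ] diffPoly where
  toFun φ := ⟨fun v => (φ : ℝ → ℝ) (v 0), comp_mem φ⟩
  map_one' := rfl
  map_mul' _ _ := rfl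
  map_zero' := rfl
  map_add' _ _ := rfl
  commutes' _ := rfl

theorem jetVar_apply (k : ℕ) (v : ℕ → ℝ) : (jetVar k : (ℕ → ℝ) → ℝ) v = v k := rfl

theorem ofSmooth_apply (φ : smoothFunctions) (v : ℕ → ℝ) :
    (ofSmooth φ : (ℕ → ℝ) → ℝ) v = (φ : ℝ → ℝ) (v 0) := rfl

theorem derivation_ext {D₁ D₂ : Derivation ℝ diffPoly diffPoly}
    (hvar : ∀ k, D₁ (jetVar k) = D₂ (jetVar k))
    (hsmooth : ∀ φ, D₁ (ofSmooth φ) = D₂ (ofSmooth φ)) : D₁ = D₂ := by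
  refine Derivation.ext_of_adjoin_eq_top _ Algebra.adjoin_adjoin_coe_preimage ?_
  rintro ⟨P, hP⟩ (⟨k, rfl⟩ | ⟨φ, rfl⟩)
  · exact hvar k
  · exact hsmooth φ

/-- The partial derivative `∂/∂u^(k)` as a derivation of differential polynomials. -/
def jetPartial (k : ℕ) : Derivation ℝ diffPoly diffPoly :=
  Derivation.mk'
    { toFun := fun P => ⟨pderivJet P k, pderivJet_mem P.2 k⟩
      map_add' := fun P Q => Subtype.ext (pderivJet_add P.2 Q.2 k)
      map_smul' := fun r P => Subtype.ext (pderivJet_smul r P k) }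
    fun P Q => Subtype.ext (pderivJet_mul P.2 Q.2 k)

theorem coe_jetPartial (k : ℕ) (P : diffPoly) :
    (jetPartial k P : (ℕ → ℝ) → ℝ) = pderivJet P k := rfl

theorem jetPartial_jetVar (k j : ℕ) : jetPartial k (jetVar j) = if j = k then 1 else 0 := by
  refine Subtype.ext ((pderivJet_coord j k).trans ?_)
  split_ifs <;> rfl

theorem jetPartial_ofSmooth (k : ℕ) (φ : smoothFunctions) :
    jetPartial k (ofSmooth φ) = if k = 0 then ofSmooth (D φ) else 0 := by
  refine Subtype.ext ((pderivJet_comp φ k).trans ?_)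
  split_ifs <;> rfl

theorem exists_forall_ge_jetPartial_eq_zero (P : diffPoly) :
    ∃ N, ∀ k ≥ N, jetPartial k P = 0 := by
  have hzero := eventually_pderivJet_eq_zero P.2
  rw [Nat.cofinite_eq_atTop, eventually_atTop] at hzero
  exact hzero.imp fun N hN k hk => Subtype.ext (hN k hk)

theorem hasFiniteSupport_apply_jetPartial (L : ℕ → Module.End ℝ diffPoly) (P : diffPoly) :
    HasFiniteSupport fun k => L k (jetPartial k P) := by
  refine (eventually_cofinite.1 (eventually_pderivJet_eq_zero P.2)).subset fun k hk hPk => hk ?_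
  have hPk' : jetPartial k P = 0 := Subtype.ext hPk
  simp only [hPk', map_zero]

/-- The operator `P ↦ Σ_k L_k (∂P/∂u^(k))`; the sum is finite since a differential polynomial
involves finitely many jet variables. -/
def sumJetPartial (L : ℕ → Module.End ℝ diffPoly) : Module.End ℝ diffPoly where
  toFun P := ∑ᶠ k, L k (jetPartial k P)
  map_add' P Q := by
    simp only [map_add]
    exact finsum_add_distrib (hasFiniteSupport_apply_jetPartial L P)
      (hasFiniteSupport_apply_jetPartial L Q)
  map_smul' r P := by
    simp only [Derivation.map_smul, map_smul, RingHom.id_apply]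
    exact (smul_finsum' r (hasFiniteSupport_apply_jetPartial L P)).symm

theorem sumJetPartial_eq_sum_range (L : ℕ → Module.End ℝ diffPoly) {P : diffPoly} {N : ℕ}
    (hN : ∀ k ≥ N, jetPartial k P = 0) :
    sumJetPartial L P = ∑ k ∈ Finset.range N, L k (jetPartial k P) := by
  refine finsum_eq_sum_of_support_subset _ fun k hk => ?_
  rw [Finset.coe_range, mem_Iio]
  by_contra! hNk
  exact hk (by simp only [hN k hNk, map_zero])

theorem sumJetPartial_apply (L : ℕ → Module.End ℝ diffPoly) (P : diffPoly) (v : ℕ → ℝ) :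
    (sumJetPartial L P : (ℕ → ℝ) → ℝ) v =
      ∑' k, (L k (jetPartial k P) : (ℕ → ℝ) → ℝ) v := by
  obtain ⟨N, hN⟩ := exists_forall_ge_jetPartial_eq_zero P
  rw [sumJetPartial_eq_sum_range L hN, tsum_eq_sum (s := Finset.range N)]
  · simp
  · intro k hk
    rw [hN k (by simpa using hk), map_zero]
    rfl

/-- The vector field `Σ_k X_k ∂/∂u^(k)` on jet space, as a derivation of differential
polynomials. -/
def vectorField (X : ℕ → diffPoly) : Derivation ℝ diffPoly diffPoly :=
  Derivation.mk' (sumJetPartial fun k => LinearMap.mulLeft ℝ (X k)) fun P Q => by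
    obtain ⟨M, hM⟩ := exists_forall_ge_jetPartial_eq_zero P
    obtain ⟨N, hN⟩ := exists_forall_ge_jetPartial_eq_zero Q
    have hM' : ∀ k ≥ max M N, jetPartial k P = 0 := fun k hk => hM k (le_of_max_le_left hk)
    have hN' : ∀ k ≥ max M N, jetPartial k Q = 0 := fun k hk => hN k (le_of_max_le_right hk)
    rw [sumJetPartial_eq_sum_range _ hM', sumJetPartial_eq_sum_range _ hN',
      sumJetPartial_eq_sum_range (N := max M N) _ fun k hk => by simp [hM' k hk, hN' k hk],
      Finset.smul_sum, Finset.smul_sum, ← Finset.sum_add_distrib]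
    refine Finset.sum_congr rfl fun k _ => ?_
    simp only [Derivation.leibniz, LinearMap.mulLeft_apply, smul_eq_mul]
    ring

theorem vectorField_jetVar (X : ℕ → diffPoly) (k : ℕ) : vectorField X (jetVar k) = X k := by
  refine (finsum_eq_single _ k fun j hj => ?_).trans ?_
  · simp [jetPartial_jetVar, hj.symm]
  · simp [jetPartial_jetVar]

theorem vectorField_ofSmooth (X : ℕ → diffPoly) (φ : smoothFunctions) :
    vectorField X (ofSmooth φ) = X 0 * ofSmooth (D φ) := by
  refine (finsum_eq_single _ 0 fun j hj => ?_).trans ?_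
  · simp [jetPartial_ofSmooth, hj]
  · simp [jetPartial_ofSmooth]

/-- The total `x`-derivative as a derivation of differential polynomials. -/
def jetTotal : Derivation ℝ diffPoly diffPoly := vectorField fun k => jetVar (k + 1)

theorem coe_jetTotal (P : diffPoly) : (jetTotal P : (ℕ → ℝ) → ℝ) = totalDer P :=
  funext fun v => sumJetPartial_apply _ P v

theorem jetTotal_jetVar (k : ℕ) : jetTotal (jetVar k) = jetVar (k + 1) :=
  vectorField_jetVar _ k

theorem jetTotal_ofSmooth (φ : smoothFunctions) :
    jetTotal (ofSmooth φ) = jetVar 1 * ofSmooth (D φ) :=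
  vectorField_ofSmooth _ φ

theorem coe_iterate_jetTotal (n : ℕ) (P : diffPoly) :
    ((jetTotal^[n] P : diffPoly) : (ℕ → ℝ) → ℝ) = totalDer^[n] P :=
  Semiconj.iterate_right (f := ((↑) : diffPoly → (ℕ → ℝ) → ℝ)) coe_jetTotal n P

theorem lie_jetPartial_zero_jetTotal : ⁅jetPartial 0, jetTotal⁆ = 0 := by
  refine derivation_ext (fun k => ?_) fun φ => ?_
  · rcases k with _ | k <;>
      simp [Derivation.commutator_apply, jetTotal_jetVar, jetPartial_jetVar]
  · simp [Derivation.commutator_apply, jetTotal_ofSmooth, jetPartial_ofSmooth, jetPartial_jetVar]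

theorem lie_jetPartial_succ_jetTotal (k : ℕ) :
    ⁅jetPartial (k + 1), jetTotal⁆ = jetPartial k := by
  refine derivation_ext (fun j => ?_) fun φ => ?_
  · by_cases h : j = k + 1 <;>
      simp [Derivation.commutator_apply, jetTotal_jetVar, jetPartial_jetVar, h]
  · rcases k with _ | k <;>
      simp [Derivation.commutator_apply, jetTotal_ofSmooth, jetPartial_ofSmooth,
        jetPartial_jetVar]

theorem jetPartial_zero_jetTotal (P : diffPoly) :
    jetPartial 0 (jetTotal P) = jetTotal (jetPartial 0 P) :=
  sub_eq_zero.1 (DFunLike.congr_fun lie_jetPartial_zero_jetTotal P)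

theorem jetPartial_succ_jetTotal (k : ℕ) (P : diffPoly) :
    jetPartial (k + 1) (jetTotal P) = jetTotal (jetPartial (k + 1) P) + jetPartial k P :=
  sub_eq_iff_eq_add'.1 (DFunLike.congr_fun (lie_jetPartial_succ_jetTotal k) P)

/-- The Euler–Lagrange operator as a linear map on differential polynomials. -/
def euler : Module.End ℝ diffPoly :=
  sumJetPartial fun k => (-1 : ℝ) ^ k • jetTotal.toLinearMap ^ k

theorem coe_euler (P : diffPoly) : (euler P : (ℕ → ℝ) → ℝ) = EulerOp P := by
  funext v
  rw [euler, sumJetPartial_apply, EulerOp]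
  refine tsum_congr fun k => ?_
  rw [← coe_jetPartial, ← coe_iterate_jetTotal, LinearMap.smul_apply, Module.End.pow_apply]
  rfl

theorem euler_eq_sum_range {P : diffPoly} {N : ℕ} (hN : ∀ k ≥ N, jetPartial k P = 0) :
    euler P = ∑ k ∈ Finset.range N, (-1 : ℝ) ^ k • jetTotal^[k] (jetPartial k P) := by
  rw [euler, sumJetPartial_eq_sum_range _ hN]
  simp only [LinearMap.smul_apply, Module.End.pow_apply, Derivation.coeFn_coe]

theorem euler_ofSmooth (φ : smoothFunctions) : euler (ofSmooth φ) = ofSmooth (D φ) := by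
  rw [euler_eq_sum_range (N := 1) fun k hk => by
    rw [jetPartial_ofSmooth, if_neg (Nat.one_le_iff_ne_zero.1 hk)]]
  simp [jetPartial_ofSmooth]

theorem sum_iterate_jetPartial_jetTotal (P : diffPoly) (N : ℕ) :
    ∑ k ∈ Finset.range (N + 1), (-1 : ℝ) ^ k • jetTotal^[k] (jetPartial k (jetTotal P)) =
      (-1 : ℝ) ^ N • jetTotal^[N + 1] (jetPartial N P) := by
  induction N with
  | zero => simp [jetPartial_zero_jetTotal]
  | succ N ih =>
    rw [Finset.sum_range_succ, ih, jetPartial_succ_jetTotal, iterate_map_add,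
      ← iterate_succ_apply, pow_succ]
    module

theorem euler_jetTotal (P : diffPoly) : euler (jetTotal P) = 0 := by
  obtain ⟨N, hN⟩ := exists_forall_ge_jetPartial_eq_zero P
  have hN' : ∀ k ≥ N + 1, jetPartial k (jetTotal P) = 0 := by
    rintro (_ | k) hk
    · omega
    · rw [jetPartial_succ_jetTotal, hN _ (by omega), hN _ (by omega), map_zero, add_zero]
  rw [euler_eq_sum_range hN', sum_iterate_jetPartial_jetTotal, hN N le_rfl, iterate_map_zero,
    smul_zero]

/-- The space of total `x`-derivatives. Densities congruent modulo this subspace define the same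
local functional. -/
def totalDerivatives : Submodule ℝ diffPoly := LinearMap.range jetTotal.toLinearMap

theorem euler_eq_of_smodEq {P Q : diffPoly} (hPQ : P ≡ Q [SMOD totalDerivatives]) :
    euler P = euler Q := by
  obtain ⟨R, hR⟩ := SModEq.sub_mem.1 hPQ
  rw [← sub_eq_zero, ← map_sub, ← hR]
  exact euler_jetTotal R

theorem smodEq_of_eq_jetTotal_add {P Q : diffPoly} (R : diffPoly) (h : P = jetTotal R + Q) :
    P ≡ Q [SMOD totalDerivatives] :=
  SModEq.sub_mem.2 ⟨R, eq_sub_of_add_eq h.symm⟩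

theorem jetTotal_mul_smodEq (P Q : diffPoly) :
    jetTotal P * Q ≡ -(P * jetTotal Q) [SMOD totalDerivatives] :=
  smodEq_of_eq_jetTotal_add (P * Q) <| by
    rw [Derivation.leibniz, smul_eq_mul, smul_eq_mul]
    ring

theorem iterate_jetTotal_mul_smodEq (k : ℕ) (P Q : diffPoly) :
    jetTotal^[k] P * Q ≡ (-1 : ℝ) ^ k • (P * jetTotal^[k] Q) [SMOD totalDerivatives] := by
  induction k generalizing Q with
  | zero => simp
  | succ k ih =>
    rw [iterate_succ_apply', iterate_succ_apply]
    refine (jetTotal_mul_smodEq _ Q).trans ((ih (jetTotal Q)).neg.trans ?_)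
    rw [pow_succ, mul_neg_one, neg_smul]

theorem ofSmooth_mul_jetVar_one_smodEq_zero (φ : smoothFunctions) :
    ofSmooth φ * jetVar 1 ≡ 0 [SMOD totalDerivatives] := by
  obtain ⟨Φ, rfl⟩ := D_surjective φ
  exact smodEq_of_eq_jetTotal_add (ofSmooth Φ) (by rw [jetTotal_ofSmooth, mul_comm, add_zero])

/-- The evolutionary vector field of `u_t = ξ`, that is `Σ_k (d/dx)^k ξ ∂/∂u^(k)`. -/
def evolutionary (ξ : diffPoly) : Derivation ℝ diffPoly diffPoly :=
  vectorField fun k => jetTotal^[k] ξ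

theorem evolutionary_jetVar (ξ : diffPoly) (k : ℕ) :
    evolutionary ξ (jetVar k) = jetTotal^[k] ξ :=
  vectorField_jetVar _ k

theorem evolutionary_ofSmooth (ξ : diffPoly) (φ : smoothFunctions) :
    evolutionary ξ (ofSmooth φ) = ξ * ofSmooth (D φ) :=
  vectorField_ofSmooth _ φ

theorem euler_mul_smodEq_evolutionary (P ξ : diffPoly) :
    euler P * ξ ≡ evolutionary ξ P [SMOD totalDerivatives] := by
  obtain ⟨N, hN⟩ := exists_forall_ge_jetPartial_eq_zero P
  have hsum : evolutionary ξ P = ∑ k ∈ Finset.range N, jetTotal^[k] ξ * jetPartial k P :=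
    sumJetPartial_eq_sum_range _ hN
  rw [euler_eq_sum_range hN, Finset.sum_mul, hsum]
  refine SModEq.sum fun k _ => ?_
  rw [smul_mul_assoc]
  refine ((iterate_jetTotal_mul_smodEq k _ ξ).smul _).trans ?_
  rw [smul_smul, ← mul_pow, neg_one_mul, neg_neg, one_pow, one_smul, mul_comm]

/-- The density `(δP/δu) · (d/dx)(δQ/δu)` of the Poisson bracket of the local functionals with
densities `P` and `Q`. -/
def bracket : diffPoly →ₗ[ℝ] diffPoly →ₗ[ℝ] diffPoly :=
  (LinearMap.mul ℝ diffPoly).compl₁₂ euler (jetTotal.toLinearMap ∘ₗ euler)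

theorem bracket_apply (P Q : diffPoly) : bracket P Q = euler P * jetTotal (euler Q) := rfl

theorem bracket_smodEq_neg_swap (P Q : diffPoly) :
    bracket P Q ≡ -bracket Q P [SMOD totalDerivatives] := by
  rw [bracket_apply, bracket_apply, mul_comm]
  exact jetTotal_mul_smodEq _ _

theorem bracket_smodEq_evolutionary (P : diffPoly) (g : smoothFunctions) :
    bracket P (ofSmooth g) ≡ evolutionary (jetTotal (ofSmooth (D g))) P
      [SMOD totalDerivatives] := by
  rw [bracket_apply, euler_ofSmooth]
  exact euler_mul_smodEq_evolutionary P _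

theorem bracket_ofSmooth_ofSmooth (f g : smoothFunctions) :
    bracket (ofSmooth f) (ofSmooth g) ≡ 0 [SMOD totalDerivatives] := by
  rw [bracket_apply, euler_ofSmooth, euler_ofSmooth, jetTotal_ofSmooth, mul_left_comm, ← map_mul,
    mul_comm]
  exact ofSmooth_mul_jetVar_one_smodEq_zero _

-- Here and below, the argument of `smodEq_of_eq_jetTotal_add` collects the boundary terms produced
-- by integrating by parts until only `u_x³`, respectively `u_x u_xx²` and `u_x⁵`, remain.
theorem bracket_sq_ofSmooth (a g : smoothFunctions) :
    bracket (ofSmooth a * jetVar 1 ^ 2) (ofSmooth g) ≡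
      ofSmooth (a * D^[3] g) * jetVar 1 ^ 3 [SMOD totalDerivatives] := by
  refine (bracket_smodEq_evolutionary _ g).trans <| smodEq_of_eq_jetTotal_add
    (ofSmooth (D^[2] g * a) * jetVar 1 ^ 2) ?_
  simp only [Derivation.leibniz, Derivation.leibniz_pow, evolutionary_jetVar,
    evolutionary_ofSmooth, jetTotal_jetVar, jetTotal_ofSmooth, iterate_succ, iterate_zero,
    comp_apply, id, map_mul, smul_eq_mul, nsmul_eq_mul]
  ring

theorem bracket_quartic_ofSmooth (a b g : smoothFunctions) :
    bracket (ofSmooth a * jetVar 2 ^ 2 + ofSmooth b * jetVar 1 ^ 4) (ofSmooth g) ≡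
      ofSmooth (5 * (a * D^[3] g)) * (jetVar 1 * jetVar 2 ^ 2) +
        ofSmooth (3 * (b * D^[3] g) - (1 / 2 : ℝ) • D (a * D^[4] g)) * jetVar 1 ^ 5
      [SMOD totalDerivatives] := by
  refine (bracket_smodEq_evolutionary _ g).trans <| smodEq_of_eq_jetTotal_add
    (ofSmooth (D^[2] g) * (ofSmooth a * jetVar 2 ^ 2 + ofSmooth b * jetVar 1 ^ 4) +
      (1 / 2 : ℝ) • (ofSmooth (a * D^[4] g) * jetVar 1 ^ 4)) ?_
  simp only [Derivation.leibniz, Derivation.leibniz_pow, evolutionary_jetVar,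
    evolutionary_ofSmooth, jetTotal_jetVar, jetTotal_ofSmooth, iterate_succ, iterate_zero,
    comp_apply, id, map_mul, map_add, map_sub, map_smul, Derivation.map_smul, map_ofNat,
    smul_eq_mul, nsmul_eq_mul]
  algebra

theorem euler_ofSmooth_mul_sq (a : smoothFunctions) :
    euler (ofSmooth a * jetVar 1 ^ 2) =
      -(ofSmooth (D a) * jetVar 1 ^ 2 + (2 : ℝ) • (ofSmooth a * jetVar 2)) := by
  rw [euler_eq_sum_range (N := 2) fun k hk => by
    obtain ⟨k, rfl⟩ := Nat.exists_eq_add_of_le' hk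
    simp [jetPartial_ofSmooth, jetPartial_jetVar]]
  have hzero : jetPartial 0 (ofSmooth a * jetVar 1 ^ 2) = ofSmooth (D a) * jetVar 1 ^ 2 := by
    simp [jetPartial_ofSmooth, jetPartial_jetVar, mul_comm]
  have hone : jetPartial 1 (ofSmooth a * jetVar 1 ^ 2) = (2 : ℝ) • (ofSmooth a * jetVar 1) := by
    simp [jetPartial_ofSmooth, jetPartial_jetVar, ofNat_smul_eq_nsmul, mul_left_comm]
  rw [Finset.sum_range_succ, Finset.sum_range_one, hzero, hone]
  simp only [iterate_zero, id, iterate_one, Derivation.map_smul, Derivation.leibniz,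
    jetTotal_jetVar, jetTotal_ofSmooth, smul_eq_mul]
  algebra

theorem bracket_sq_sq (a b : smoothFunctions) :
    bracket (ofSmooth a * jetVar 1 ^ 2) (ofSmooth b * jetVar 1 ^ 2) ≡
      ofSmooth (6 * (a * D b - D a * b)) * (jetVar 1 * jetVar 2 ^ 2) +
        ofSmooth ((1 / 2 : ℝ) • (D^[3] a * b - a * D^[3] b)) * jetVar 1 ^ 5
      [SMOD totalDerivatives] := by
  rw [bracket_apply, euler_ofSmooth_mul_sq, euler_ofSmooth_mul_sq]
  refine smodEq_of_eq_jetTotal_add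
    ((2 : ℝ) • (ofSmooth (a * b) * jetVar 2 ^ 2 +
        ofSmooth (D a * b) * (jetVar 1 ^ 2 * jetVar 2)) +
      (1 / 2 : ℝ) • (ofSmooth (D a * D b + a * D (D b) - D (D a) * b) * jetVar 1 ^ 4)) ?_
  simp only [Derivation.leibniz, Derivation.leibniz_pow, jetTotal_jetVar, jetTotal_ofSmooth,
    iterate_succ, iterate_zero, comp_apply, id, map_mul, map_add, map_sub, map_neg, map_smul,
    Derivation.map_smul, map_ofNat, Nat.reduceAdd, smul_eq_mul, nsmul_eq_mul]
  algebra

section Dop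

variable (c p s : smoothFunctions)

/-- The coefficient of `ε²` in `D_{(c,p,s)}(h)`. -/
def dopTwo (h : smoothFunctions) : diffPoly :=
  -(1 / 2 : ℝ) • (ofSmooth (c * D^[3] h) * jetVar 1 ^ 2)

/-- The function `p_h` in the coefficient of `u_xx²`, with values bundled as smooth functions. -/
def smoothPCoef (h : smoothFunctions) : smoothFunctions :=
  p * D^[3] h + (3 / 10 : ℝ) • (c ^ 2 * D^[4] h)

/-- The function `s_h` in the coefficient of `u_x⁴`, with values bundled as smooth functions. -/
def smoothSCoef (h : smoothFunctions) : smoothFunctions :=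
  s * D^[3] h - (1 / 8 : ℝ) • (c * D^[2] c * D^[4] h) - (1 / 8 : ℝ) • (c * D c * D^[5] h)
    - (1 / 24 : ℝ) • (c ^ 2 * D^[6] h) - (1 / 6 : ℝ) • (D p * D^[4] h)
    - (1 / 6 : ℝ) • (p * D^[5] h)

/-- The coefficient of `ε⁴` in `D_{(c,p,s)}(h)`. -/
def dopFour (h : smoothFunctions) : diffPoly :=
  ofSmooth (smoothPCoef c p h) * jetVar 2 ^ 2 + ofSmooth (smoothSCoef c p s h) * jetVar 1 ^ 4

/-- The density `D_{(c,p,s)}(h)` as a differential polynomial. -/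
def dop (h : smoothFunctions) (ε : ℝ) : diffPoly :=
  ofSmooth h + ε ^ 2 • dopTwo c h + ε ^ 4 • dopFour c p s h

theorem coe_dop (h : smoothFunctions) (ε : ℝ) :
    (dop c p s h ε : (ℕ → ℝ) → ℝ) = Dop c p s h ε := by
  funext v
  simp only [dop, dopTwo, dopFour, smoothPCoef, smoothSCoef, Dop, cCoef, pCoef, sCoef,
    Subalgebra.coe_add, Subalgebra.coe_sub, Subalgebra.coe_mul, Subalgebra.coe_smul,
    Subalgebra.coe_pow, Pi.add_apply, Pi.sub_apply, Pi.mul_apply, Pi.smul_apply, Pi.pow_apply,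
    smul_eq_mul, jetVar_apply, ofSmooth_apply, coe_iterate_D, coe_D]
  ring

variable (f g : smoothFunctions)

theorem bracket_dopTwo_ofSmooth_comm :
    bracket (dopTwo c f) (ofSmooth g) ≡ bracket (dopTwo c g) (ofSmooth f)
      [SMOD totalDerivatives] := by
  rw [dopTwo, dopTwo, map_smul, map_smul, LinearMap.smul_apply, LinearMap.smul_apply]
  grw [bracket_sq_ofSmooth, bracket_sq_ofSmooth, mul_right_comm]

theorem bracket_order_two :
    bracket (ofSmooth f) (dopTwo c g) + bracket (dopTwo c f) (ofSmooth g) ≡ 0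
      [SMOD totalDerivatives] := by
  grw [bracket_smodEq_neg_swap (ofSmooth f), bracket_dopTwo_ofSmooth_comm c f g, neg_add_cancel]

theorem bracket_dopTwo_dopTwo :
    bracket (dopTwo c f) (dopTwo c g) = (1 / 4 : ℝ) •
      bracket (ofSmooth (c * D^[3] f) * jetVar 1 ^ 2) (ofSmooth (c * D^[3] g) * jetVar 1 ^ 2) := by
  rw [dopTwo, dopTwo, map_smul, map_smul, LinearMap.smul_apply, smul_smul]
  norm_num

-- The next two identities are what determines the terms with explicit numerical factors in `p_h`
-- and `s_h`: the left-hand sides are the coefficients of `u_x u_xx²` and of `u_x⁵` in the normal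
-- form of the `ε⁴` part of the bracket.
theorem order_four_coeff_jetVar_one_mul_jetVar_two_sq :
    -(5 * (smoothPCoef c p g * D^[3] f)) +
        (1 / 4 : ℝ) • (6 * (c * D^[3] f * D (c * D^[3] g) - D (c * D^[3] f) * (c * D^[3] g))) +
      5 * (smoothPCoef c p f * D^[3] g) = 0 := by
  simp only [smoothPCoef, Derivation.leibniz, iterate_succ, iterate_zero, comp_apply, id,
    smul_eq_mul]
  algebra

theorem order_four_coeff_jetVar_one_pow_five :
    -(3 * (smoothSCoef c p s g * D^[3] f) - (1 / 2 : ℝ) • D (smoothPCoef c p g * D^[4] f)) +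
        (1 / 4 : ℝ) • (1 / 2 : ℝ) •
          (D^[3] (c * D^[3] f) * (c * D^[3] g) - c * D^[3] f * D^[3] (c * D^[3] g)) +
      (3 * (smoothSCoef c p s f * D^[3] g) - (1 / 2 : ℝ) • D (smoothPCoef c p f * D^[4] g)) =
        0 := by
  simp only [smoothPCoef, smoothSCoef, Derivation.leibniz, Derivation.leibniz_pow,
    Derivation.map_smul, map_add, iterate_succ, iterate_zero, comp_apply, id, smul_eq_mul,
    nsmul_eq_mul]
  algebra

theorem bracket_order_four :
    bracket (ofSmooth f) (dopFour c p s g) + bracket (dopTwo c f) (dopTwo c g) +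
      bracket (dopFour c p s f) (ofSmooth g) ≡ 0 [SMOD totalDerivatives] := by
  have hquad := congrArg ofSmooth (order_four_coeff_jetVar_one_mul_jetVar_two_sq c p f g)
  have hquint := congrArg ofSmooth (order_four_coeff_jetVar_one_pow_five c p s f g)
  rw [map_add, map_add, map_neg, map_smul, map_zero] at hquad hquint
  grw [bracket_smodEq_neg_swap (ofSmooth f), bracket_dopTwo_dopTwo, dopFour, dopFour,
    bracket_quartic_ofSmooth, bracket_quartic_ofSmooth, bracket_sq_sq]
  refine SModEq.def.2 (congrArg _ ?_)
  rw [smul_add, ← smul_mul_assoc, ← smul_mul_assoc]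
  linear_combination jetVar 1 * jetVar 2 ^ 2 * hquad + jetVar 1 ^ 5 * hquint

theorem euler_bracket_dop (ε : ℝ) :
    euler (bracket (dop c p s f ε) (dop c p s g ε)) =
      ε ^ 6 • euler (bracket (dopTwo c f) (dopFour c p s g) +
        bracket (dopFour c p s f) (dopTwo c g)) +
      ε ^ 8 • euler (bracket (dopFour c p s f) (dopFour c p s g)) := by
  rw [← map_smul, ← map_smul, ← map_add]
  refine euler_eq_of_smodEq ?_
  calc bracket (dop c p s f ε) (dop c p s g ε)
    _ = bracket (ofSmooth f) (ofSmooth g) +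
        ε ^ 2 • (bracket (ofSmooth f) (dopTwo c g) + bracket (dopTwo c f) (ofSmooth g)) +
        ε ^ 4 • (bracket (ofSmooth f) (dopFour c p s g) + bracket (dopTwo c f) (dopTwo c g) +
          bracket (dopFour c p s f) (ofSmooth g)) +
        (ε ^ 6 • (bracket (dopTwo c f) (dopFour c p s g) +
            bracket (dopFour c p s f) (dopTwo c g)) +
          ε ^ 8 • bracket (dopFour c p s f) (dopFour c p s g)) := by
      simp only [dop, map_add, map_smul, LinearMap.add_apply, LinearMap.smul_apply]
      module
    _ ≡ _ [SMOD totalDerivatives] := by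
      grw [bracket_ofSmooth_ofSmooth, bracket_order_two, bracket_order_four, smul_zero, smul_zero,
        add_zero, add_zero, zero_add]

theorem coe_bracket_dop (ε : ℝ) :
    (bracket (dop c p s f ε) (dop c p s g ε) : (ℕ → ℝ) → ℝ) =
      fun w => EulerOp (Dop c p s f ε) w * totalDer (EulerOp (Dop c p s g ε)) w := by
  rw [← coe_dop, ← coe_dop, ← coe_euler, ← coe_euler, ← coe_jetTotal]
  rfl

end Dop

end diffPoly

/-- Dubrovin: for any pair of smooth functions `f, g`, the local
functionals `H_f = ∫D_{(c,p,s)}(f)dx` and `H_g = ∫D_{(c,p,s)}(g)dx` commute up to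
order `ε⁶`: the coefficients of `ε⁰, ..., ε⁵` (in particular of `ε⁰, ε², ε⁴`) of
`E((δH_f/δu)·(d/dx)(δH_g/δu))` vanish identically as differential polynomials.
In particular (taking `g := h`) every `H_f` is an approximate conserved quantity,
up to order `ε⁶`, of the PDE (eveq). -/
theorem Dop_functionals_commute_up_to_eps6
    (h c p s : ℝ → ℝ)
    (hh : ContDiff ℝ (⊤ : ℕ∞) h) (hc : ContDiff ℝ (⊤ : ℕ∞) c)
    (hp : ContDiff ℝ (⊤ : ℕ∞) p) (hs : ContDiff ℝ (⊤ : ℕ∞) s)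
    (f g : ℝ → ℝ)
    (hf : ContDiff ℝ (⊤ : ℕ∞) f) (hg : ContDiff ℝ (⊤ : ℕ∞) g) :
    ∀ v : ℕ → ℝ, ∀ j < 6,
      iteratedDeriv j (fun ε =>
        EulerOp (fun w =>
          EulerOp (Dop c p s f ε) w * totalDer (EulerOp (Dop c p s g ε)) w) v) 0 = 0 := by
  lift c to smoothFunctions using smoothFunctions.mem_iff.2 hc
  lift p to smoothFunctions using smoothFunctions.mem_iff.2 hp
  lift s to smoothFunctions using smoothFunctions.mem_iff.2 hs
  lift f to smoothFunctions using smoothFunctions.mem_iff.2 hf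
  lift g to smoothFunctions using smoothFunctions.mem_iff.2 hg
  intro v j hj
  simp only [← diffPoly.coe_bracket_dop, ← diffPoly.coe_euler, diffPoly.euler_bracket_dop,
    Subalgebra.coe_add, Subalgebra.coe_smul, Pi.add_apply, Pi.smul_apply, smul_eq_mul]
  rw [iteratedDeriv_fun_add (by fun_prop) (by fun_prop)]
  simp [show 6 - j ≠ 0 by lia, show 8 - j ≠ 0 by lia]
end
end

section
/- Let a be a smooth function with a' nowhere vanishing, and let κ₁, κ₂ be real constants. Choose h with h'' = a, c = κ₁/a', p = κ₂/(2a') − (3κ₁²/10)·a''/(a')³, and s = κ₁²·( (2/5)·(a'')³/(a')⁵ − (7/20)·a''·a'''/(a')⁴ + (1/24)·a''''/(a')³ ) − (κ₂/12)·( (a'')²/(a')³ − a'''/(a')² ). Then, identically as differential polynomials in u, u_x, …, u_xxxxx, the Hamiltonian perturbation ∂_x E(D_{(c,p,s)}(h)) equals a(u)·u_x + ε²·κ₁·u_xxx + ε⁴·κ₂·u_xxxxx; that is, with these choices the generalized KdV equation u_t = a(u)u_x + ε²κ₁u_xxx + ε⁴κ₂u_xxxxx belongs to the class of Hamiltonian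 perturbations. -/
open Set

noncomputable section

/-!
Put `b = 1 / a'`, the reciprocal of `h'''`. Then `c = κ₁ b` makes `c_h = κ₁`, the correction
`-(3κ₁²/10) a'' / a'³` in `p` cancels `(3/10) c² h⁽⁴⁾` and leaves `p_h = κ₂ / 2`, and `s` is the
solution of `s_h = 0`. Hence `D(h) = h(u) - (ε²κ₁/2) u_x² + (ε⁴κ₂/2) u_xx²`, whose Hamiltonian flow
is read off term by term: `∂_x E` sends `½ (u⁽ᵏ⁾)²` to `(-1)ᵏ u⁽²ᵏ⁺¹⁾` and `h(u)` to
`h''(u) u_x = a(u) u_x`.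
-/

theorem totalDer_zero : totalDer 0 = 0 := by
  funext v
  simp [totalDer, pderivJet]

section SeparatedDensities

variable {ι : Type*} [Fintype ι] {m : ι → ℕ}

theorem pderivJet_sum (hm : Function.Injective m) (g : ι → ℝ → ℝ) (i : ι) :
    pderivJet (fun v => ∑ j, g j (v (m j))) (m i) = fun v => deriv (g i) (v (m i)) := by
  classical
  funext v
  have isolate (y : ℝ) : ∑ j, g j (Function.update v (m i) y (m j)) =
      g i y + ∑ j ∈ Finset.univ.erase i, g j (v (m j)) := by
    rw [← Finset.add_sum_erase _ _ (Finset.mem_univ i), Function.update_self]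
    refine congrArg _ (Finset.sum_congr rfl fun j hj => ?_)
    rw [Function.update_of_ne (hm.ne (Finset.ne_of_mem_erase hj))]
  simp only [pderivJet, isolate, deriv_add_const]

theorem pderivJet_sum_of_notMem_range (g : ι → ℝ → ℝ) {k : ℕ} (hk : k ∉ Set.range m) :
    pderivJet (fun v => ∑ j, g j (v (m j))) k = 0 := by
  funext v
  have hne (j : ι) : m j ≠ k := fun h => hk ⟨j, h⟩
  simp [pderivJet, Function.update_of_ne (hne _)]

theorem totalDer_sum (hm : Function.Injective m) (g : ι → ℝ → ℝ) :
    totalDer (fun v => ∑ j, g j (v (m j))) =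
      fun v => ∑ j, v (m j + 1) * deriv (g j) (v (m j)) := by
  funext v
  rw [totalDer, ← hm.tsum_eq, tsum_fintype]
  · simp only [pderivJet_sum hm]
  · refine Function.support_subset_iff'.2 fun k hk => ?_
    simp [pderivJet_sum_of_notMem_range g hk]

theorem EulerOp_sum (hm : Function.Injective m) (g : ι → ℝ → ℝ) :
    EulerOp (fun v => ∑ j, g j (v (m j))) =
      fun v => ∑ j, (-1) ^ m j * totalDer^[m j] (fun w => deriv (g j) (w (m j))) v := by
  funext v
  rw [EulerOp, ← hm.tsum_eq, tsum_fintype]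
  · simp only [pderivJet_sum hm]
  · refine Function.support_subset_iff'.2 fun k hk => ?_
    simp [pderivJet_sum_of_notMem_range g hk, Function.iterate_fixed totalDer_zero]

end SeparatedDensities

section QuadraticDensities

theorem totalDer_const_mul_coord (r : ℝ) (n : ℕ) :
    totalDer (fun v => r * v n) = fun v => r * v (n + 1) := by
  simpa [mul_comm] using
    totalDer_sum (Function.injective_of_subsingleton fun _ : Unit => n) fun _ y => r * y

theorem totalDer_iterate_const_mul_coord (r : ℝ) (n k : ℕ) :
    totalDer^[k] (fun v => r * v n) = fun v => r * v (n + k) := by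
  induction k with
  | zero => rfl
  | succ k ih => rw [Function.iterate_succ_apply', ih, totalDer_const_mul_coord, add_assoc]

variable {n : ℕ}

/-- The jet density `f(u) + ½ ∑ α k (u⁽ᵏ⁺¹⁾)²`, whose Euler–Lagrange expression is linear in the
derivatives of `u`. The index is shifted: `α 0` belongs to `u_x`. -/
def quadraticDensity (f : ℝ → ℝ) (α : Fin n → ℝ) (v : ℕ → ℝ) : ℝ :=
  f (v 0) + ∑ k : Fin n, α k / 2 * v (k + 1) ^ 2

theorem EulerOp_quadraticDensity (f : ℝ → ℝ) (α : Fin n → ℝ) :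
    EulerOp (quadraticDensity f α) =
      fun v => deriv f (v 0) + ∑ k : Fin n, (-1) ^ (k + 1 : ℕ) * α k * v (2 * (k + 1)) := by
  have separated : quadraticDensity f α = fun v =>
      ∑ j : Fin (n + 1), (Fin.cons f fun k y => α k / 2 * y ^ 2 : Fin (n + 1) → ℝ → ℝ) j (v j) := by
    funext v
    simp [quadraticDensity, Fin.sum_univ_succ]
  have deriv_quadratic (r y : ℝ) : deriv (fun z => r / 2 * z ^ 2) y = r * y :=
    (((hasDerivAt_pow 2 y).const_mul (r / 2)).congr_deriv (by push_cast; ring)).deriv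
  rw [separated, EulerOp_sum Fin.val_injective]
  funext v
  simp only [Fin.sum_univ_succ, Fin.cons_zero, Fin.cons_succ, Fin.val_zero, Fin.val_succ,
    Function.iterate_zero, id_eq, pow_zero, one_mul, deriv_quadratic,
    totalDer_iterate_const_mul_coord, mul_assoc, two_mul]

theorem totalDer_EulerOp_quadraticDensity (f : ℝ → ℝ) (α : Fin n → ℝ) :
    totalDer (EulerOp (quadraticDensity f α)) = fun v =>
      iteratedDeriv 2 f (v 0) * v 1 +
        ∑ k : Fin n, (-1) ^ (k + 1 : ℕ) * α k * v (2 * (k + 1) + 1) := by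
  have separated : EulerOp (quadraticDensity f α) = fun v => ∑ j : Fin (n + 1),
      (Fin.cons (deriv f) fun k y => (-1) ^ (k + 1 : ℕ) * α k * y : Fin (n + 1) → ℝ → ℝ) j
        (v (2 * j)) := by
    funext v
    simp [EulerOp_quadraticDensity, Fin.sum_univ_succ]
  have even_injective : Function.Injective fun j : Fin (n + 1) => 2 * (j : ℕ) :=
    fun i j hij => Fin.ext (Nat.eq_of_mul_eq_mul_left two_pos hij)
  rw [separated, totalDer_sum even_injective]
  funext v
  simp [Fin.sum_univ_succ, iteratedDeriv_succ, mul_comm]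

end QuadraticDensities

section IteratedDerivatives

variable {𝕜 F : Type*} [NontriviallyNormedField 𝕜] [NormedAddCommGroup F] [NormedSpace 𝕜 F]
  {f g : 𝕜 → F}

theorem hasDerivAt_iteratedDeriv {n : ℕ} (hf : ContDiff 𝕜 (n + 1) f) (w : 𝕜) :
    HasDerivAt (iteratedDeriv n f) (iteratedDeriv (n + 1) f w) w := by
  rw [iteratedDeriv_succ]
  exact (hf.differentiable_iteratedDeriv' n w).hasDerivAt

theorem hasDerivAt_deriv (hf : ContDiff 𝕜 2 f) (w : 𝕜) :
    HasDerivAt (deriv f) (iteratedDeriv 2 f w) w := by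
  simpa only [iteratedDeriv_one] using hasDerivAt_iteratedDeriv (n := 1) hf w

theorem iteratedDeriv_add_of_iteratedDeriv_eq {m : ℕ} (hfg : iteratedDeriv m f = g) (n : ℕ) :
    iteratedDeriv (n + m) f = iteratedDeriv n g := by
  simp only [← hfg, iteratedDeriv_eq_iterate, Function.iterate_add_apply]

end IteratedDerivatives

section KdVCoefficients

variable {a h : ℝ → ℝ} (κ₁ κ₂ : ℝ)

/-- The coefficient `c` of the generalized KdV equation, solving `c_h = κ₁` when `h'' = a`. -/
def kdvC (a : ℝ → ℝ) (w : ℝ) : ℝ := κ₁ / deriv a w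

/-- The coefficient `p` of the generalized KdV equation, solving `p_h = κ₂ / 2` when `h'' = a` and
`c = kdvC κ₁ a`. -/
def kdvP (a : ℝ → ℝ) (w : ℝ) : ℝ :=
  κ₂ / (2 * deriv a w) - (3 * κ₁ ^ 2 / 10) * iteratedDeriv 2 a w / deriv a w ^ 3

/-- The coefficient `s` of the generalized KdV equation, solving `s_h = 0` when `h'' = a`,
`c = kdvC κ₁ a` and `p = kdvP κ₁ κ₂ a`. -/
def kdvS (a : ℝ → ℝ) (w : ℝ) : ℝ :=
  κ₁ ^ 2 * ((2 / 5) * iteratedDeriv 2 a w ^ 3 / deriv a w ^ 5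
      - (7 / 20) * iteratedDeriv 2 a w * iteratedDeriv 3 a w / deriv a w ^ 4
      + (1 / 24) * iteratedDeriv 4 a w / deriv a w ^ 3)
    - (κ₂ / 12) * (iteratedDeriv 2 a w ^ 2 / deriv a w ^ 3 - iteratedDeriv 3 a w / deriv a w ^ 2)

theorem deriv_kdvC (ha : ContDiff ℝ 2 a) {w : ℝ} (hw : deriv a w ≠ 0) :
    deriv (kdvC κ₁ a) w = -κ₁ * iteratedDeriv 2 a w / deriv a w ^ 2 := by
  refine (((hasDerivAt_const w κ₁).fun_div (hasDerivAt_deriv ha w) hw).congr_deriv ?_).deriv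
  ring

theorem iteratedDeriv_two_kdvC (ha : ContDiff ℝ 3 a) (ha' : ∀ w, deriv a w ≠ 0) (w : ℝ) :
    iteratedDeriv 2 (kdvC κ₁ a) w = κ₁ * (2 * iteratedDeriv 2 a w ^ 2 / deriv a w ^ 3
      - iteratedDeriv 3 a w / deriv a w ^ 2) := by
  have ha₂ : ContDiff ℝ 2 a := ha.of_le (by norm_num)
  have hw := ha' w
  have derivC : deriv (kdvC κ₁ a) = fun y => -κ₁ * iteratedDeriv 2 a y / deriv a y ^ 2 :=
    funext fun y => deriv_kdvC κ₁ ha₂ (ha' y)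
  rw [iteratedDeriv_succ, iteratedDeriv_one, derivC]
  refine (((hasDerivAt_iteratedDeriv (n := 2) ha w).const_mul (-κ₁)).fun_div
    ((hasDerivAt_deriv ha₂ w).fun_pow 2) (pow_ne_zero 2 hw)).deriv.trans ?_
  field_simp
  ring

theorem deriv_kdvP (ha : ContDiff ℝ 3 a) {w : ℝ} (hw : deriv a w ≠ 0) :
    deriv (kdvP κ₁ κ₂ a) w = -κ₂ * iteratedDeriv 2 a w / (2 * deriv a w ^ 2)
      - 3 * κ₁ ^ 2 / 10 * (iteratedDeriv 3 a w / deriv a w ^ 3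
        - 3 * iteratedDeriv 2 a w ^ 2 / deriv a w ^ 4) := by
  have d₁ := hasDerivAt_deriv (ha.of_le (by norm_num)) w
  have d₂ := hasDerivAt_iteratedDeriv (n := 2) ha w
  refine (((hasDerivAt_const w κ₂).fun_div (d₁.const_mul 2) (by simpa using hw)).fun_sub
    ((d₂.const_mul (3 * κ₁ ^ 2 / 10)).fun_div (d₁.fun_pow 3) (pow_ne_zero 3 hw))).deriv.trans ?_
  field_simp
  ring

theorem cCoef_kdv (hh : iteratedDeriv 2 h = a) {w : ℝ} (hw : deriv a w ≠ 0) :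
    cCoef (kdvC κ₁ a) h w = κ₁ := by
  rw [cCoef, iteratedDeriv_add_of_iteratedDeriv_eq hh 1, iteratedDeriv_one, kdvC,
    div_mul_cancel₀ _ hw]

theorem pCoef_kdv (hh : iteratedDeriv 2 h = a) {w : ℝ} (hw : deriv a w ≠ 0) :
    pCoef (kdvC κ₁ a) (kdvP κ₁ κ₂ a) h w = κ₂ / 2 := by
  rw [pCoef, iteratedDeriv_add_of_iteratedDeriv_eq hh 1, iteratedDeriv_one,
    iteratedDeriv_add_of_iteratedDeriv_eq hh 2, kdvC, kdvP]
  field_simp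
  ring

theorem sCoef_kdv (ha : ContDiff ℝ 3 a) (hh : iteratedDeriv 2 h = a) (ha' : ∀ w, deriv a w ≠ 0)
    (w : ℝ) : sCoef (kdvC κ₁ a) (kdvP κ₁ κ₂ a) (kdvS κ₁ κ₂ a) h w = 0 := by
  have hw := ha' w
  rw [sCoef, iteratedDeriv_add_of_iteratedDeriv_eq hh 1, iteratedDeriv_one,
    iteratedDeriv_add_of_iteratedDeriv_eq hh 2, iteratedDeriv_add_of_iteratedDeriv_eq hh 3,
    iteratedDeriv_add_of_iteratedDeriv_eq hh 4,
    iteratedDeriv_two_kdvC κ₁ ha ha', deriv_kdvC κ₁ (ha.of_le (by norm_num)) hw,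
    deriv_kdvP κ₁ κ₂ ha hw, kdvC, kdvP, kdvS]
  field_simp
  ring

theorem Dop_kdv_eq_quadraticDensity (ha : ContDiff ℝ 3 a) (hh : iteratedDeriv 2 h = a)
    (ha' : ∀ w, deriv a w ≠ 0) (ε : ℝ) :
    Dop (kdvC κ₁ a) (kdvP κ₁ κ₂ a) (kdvS κ₁ κ₂ a) h ε =
      quadraticDensity h ![-(ε ^ 2 * κ₁), ε ^ 4 * κ₂] := by
  funext v
  rw [Dop, cCoef_kdv κ₁ hh (ha' _), pCoef_kdv κ₁ κ₂ hh (ha' _), sCoef_kdv κ₁ κ₂ ha hh ha']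
  simp only [quadraticDensity, Fin.sum_univ_two, Matrix.cons_val_zero, Matrix.cons_val_one,
    Fin.val_zero, Fin.val_one]
  ring

end KdVCoefficients

theorem generalized_kdv_is_hamiltonian_perturbation_general {a h : ℝ → ℝ} (κ₁ κ₂ : ℝ)
    (hh : ContDiff ℝ 6 h) (hh2 : iteratedDeriv 2 h = a) (ha' : ∀ w, deriv a w ≠ 0)
    (ε : ℝ) (v : ℕ → ℝ) :
    totalDer (EulerOp (Dop (kdvC κ₁ a) (kdvP κ₁ κ₂ a) (kdvS κ₁ κ₂ a) h ε)) v =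
      a (v 0) * v 1 + ε ^ 2 * κ₁ * v 3 + ε ^ 4 * κ₂ * v 5 := by
  have ha : ContDiff ℝ 4 a := by
    rw [← hh2, iteratedDeriv_eq_iterate]
    exact ContDiff.iterate_deriv' 4 2 hh
  rw [Dop_kdv_eq_quadraticDensity κ₁ κ₂ (ha.of_le (by norm_num)) hh2 ha',
    totalDer_EulerOp_quadraticDensity, hh2]
  simp [Fin.sum_univ_two, add_assoc]

/-- the generalized KdV equation
`u_t = a(u)u_x + ε²κ₁u_xxx + ε⁴κ₂u_xxxxx` belongs to the class of Hamiltonian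
perturbations, for the indicated choice of `h, c, p, s`. -/
theorem generalized_kdv_is_hamiltonian_perturbation
    (a h c p s : ℝ → ℝ) (κ₁ κ₂ : ℝ)
    (ha : ContDiff ℝ (⊤ : ℕ∞) a) (hh : ContDiff ℝ (⊤ : ℕ∞) h)
    (ha' : ∀ w, deriv a w ≠ 0)
    (hh2 : ∀ w, iteratedDeriv 2 h w = a w)
    (hcdef : ∀ w, c w = κ₁ / deriv a w)
    (hpdef : ∀ w, p w = κ₂ / (2 * deriv a w)
      - (3 * κ₁^2 / 10) * iteratedDeriv 2 a w / (deriv a w)^3)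
    (hsdef : ∀ w, s w = κ₁^2 * ((2/5) * (iteratedDeriv 2 a w)^3 / (deriv a w)^5
        - (7/20) * iteratedDeriv 2 a w * iteratedDeriv 3 a w / (deriv a w)^4
        + (1/24) * iteratedDeriv 4 a w / (deriv a w)^3)
      - (κ₂/12) * ((iteratedDeriv 2 a w)^2 / (deriv a w)^3
        - iteratedDeriv 3 a w / (deriv a w)^2)) :
    ∀ (ε : ℝ) (v : ℕ → ℝ),
      totalDer (EulerOp (Dop c p s h ε)) v
        = a (v 0) * v 1 + ε^2 * κ₁ * v 3 + ε^4 * κ₂ * v 5 := by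
  intro ε v
  obtain rfl : c = kdvC κ₁ a := funext hcdef
  obtain rfl : p = kdvP κ₁ κ₂ a := funext hpdef
  obtain rfl : s = kdvS κ₁ κ₂ a := funext hsdef
  exact generalized_kdv_is_hamiltonian_perturbation_general κ₁ κ₂
    (contDiff_infty.1 hh 6) (funext hh2) ha' ε v
end
end
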